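/- The multiple-conclusion logic ⊩_⊞ is the smallest multiple-conclusion consequence relation containing the two rules ({p,q}, {p⊞q}) and ({p⊞q}, {p,q}): the intersection of all relations ⊩ ⊆ ℘(L_⊞) × ℘(L_⊞) which satisfy overlap, dilution, cut and substitution invariance and for which {p,q} ⊩ {p⊞q} and {p⊞q} ⊩ {p,q}, equals ⊩_⊞. -/

import Mathlib

/-- Formulas built from countably many propositional variables with a single
binary connective `⊞` (platypus). -/
inductive Fm : Type where
  | var : ℕ → Fm
  | pl : Fm → Fm → Fm
deriving DecidableEq

namespace Fm

/-- The set of propositional variables occurring in a formula. -/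
def vars : Fm → Set ℕ
  | var n => {n}
  | pl a b => vars a ∪ vars b

/-- A `𝔅_⊞`-valuation: a two-valued function such that
`v (φ ⊞ ψ) ∈ {min (v φ) (v ψ), max (v φ) (v ψ)}`. -/
def IsVal (v : Fm → Bool) : Prop :=
  ∀ a b : Fm, v (a.pl b) = (v a && v b) ∨ v (a.pl b) = (v a || v b)

/-- The multiple-conclusion consequence `Γ ⊩_⊞ Δ`. -/
def Mc (Γ Δ : Set Fm) : Prop :=
  ∀ v : Fm → Bool, IsVal v → (∀ φ ∈ Γ, v φ = true) → ∃ ψ ∈ Δ, v ψ = true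

/-- The single-conclusion consequence `Γ ⊢_⊞ φ`. -/
def Sc (Γ : Set Fm) (φ : Fm) : Prop := Mc Γ {φ}

end Fm

namespace Fm

/-- Homomorphic extension of a substitution `σ : P → L_⊞` to formulas. -/
def subst (σ : ℕ → Fm) : Fm → Fm
  | var n => σ n
  | pl a b => (subst σ a).pl (subst σ b)

/-- A (Scottian) multiple-conclusion consequence relation: overlap, dilution,
cut (for every partition `⟨Ω, Ωᶜ⟩` of the language) and substitution
invariance. -/
def IsMCR (C : Set Fm → Set Fm → Prop) : Prop :=
  (∀ Γ Δ : Set Fm, (Γ ∩ Δ).Nonempty → C Γ Δ) ∧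
  (∀ Γ Γ' Δ Δ' : Set Fm, C Γ Δ → C (Γ ∪ Γ') (Δ ∪ Δ')) ∧
  (∀ Γ Δ : Set Fm, (∀ Ω : Set Fm, C (Γ ∪ Ω) (Ωᶜ ∪ Δ)) → C Γ Δ) ∧
  (∀ (σ : ℕ → Fm) (Γ Δ : Set Fm), C Γ Δ → C (subst σ '' Γ) (subst σ '' Δ))

end Fm

/-!
Cut over the whole language reduces `C Γ Δ` to the partitions `⟨Ω, Ωᶜ⟩` with `Γ ⊆ Ω` and `Δ ⊆ Ωᶜ`.
The two rules force every set `Ω` with `¬ C Ω Ωᶜ` to be the truth set of a `𝔅_⊞`-valuation,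
so if `C` fails at such a partition, then that valuation refutes `Γ ⊩_⊞ Δ`.
-/

namespace Fm

theorem isVal_iff {v : Fm → Bool} :
    IsVal v ↔ ∀ a b : Fm, (v a = true → v b = true → v (a.pl b) = true) ∧
      (v (a.pl b) = true → v a = true ∨ v b = true) := by
  refine forall₂_congr fun a b => ?_
  cases v a <;> cases v b <;> cases v (a.pl b) <;> decide

theorem IsVal.comp_subst {v : Fm → Bool} (hv : IsVal v) (σ : ℕ → Fm) : IsVal (v ∘ subst σ) :=
  fun a b => hv (subst σ a) (subst σ b)

theorem mc_pl_intro (a b : Fm) : Mc {a, b} {a.pl b} := fun _v hv hab =>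
  ⟨a.pl b, rfl, (isVal_iff.mp hv a b).1 (hab a (Or.inl rfl)) (hab b (Or.inr rfl))⟩

theorem mc_pl_elim (a b : Fm) : Mc {a.pl b} {a, b} := fun _v hv hpl =>
  ((isVal_iff.mp hv a b).2 (hpl _ rfl)).elim
    (fun ha => ⟨a, Or.inl rfl, ha⟩) (fun hb => ⟨b, Or.inr rfl, hb⟩)

theorem isMCR_mc : IsMCR Mc := by
  refine ⟨?overlap, ?dilution, ?cut, ?substitution⟩
  case overlap =>
    rintro Γ Δ ⟨φ, hφΓ, hφΔ⟩ v - hΓ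
    exact ⟨φ, hφΔ, hΓ φ hφΓ⟩
  case dilution =>
    intro Γ Γ' Δ Δ' h v hv hΓ
    obtain ⟨ψ, hψΔ, hψ⟩ := h v hv fun φ hφ => hΓ φ (Or.inl hφ)
    exact ⟨ψ, Or.inl hψΔ, hψ⟩
  case cut =>
    intro Γ Δ h v hv hΓ
    obtain ⟨ψ, hψΩ | hψΔ, hψ⟩ := h {φ | v φ = true} v hv fun φ hφ => hφ.elim (hΓ φ) id
    · exact absurd hψ hψΩ
    · exact ⟨ψ, hψΔ, hψ⟩
  case substitution =>
    intro σ Γ Δ h v hv hΓ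
    obtain ⟨ψ, hψΔ, hψ⟩ :=
      h (v ∘ subst σ) (hv.comp_subst σ) fun φ hφ => hΓ _ (Set.mem_image_of_mem _ hφ)
    exact ⟨subst σ ψ, Set.mem_image_of_mem _ hψΔ, hψ⟩

namespace IsMCR

variable {C : Set Fm → Set Fm → Prop} {Γ Γ' Δ Δ' Ω : Set Fm}

theorem overlap (hC : IsMCR C) {φ : Fm} (hΓ : φ ∈ Γ) (hΔ : φ ∈ Δ) : C Γ Δ :=
  hC.1 Γ Δ ⟨φ, hΓ, hΔ⟩

theorem mono (hC : IsMCR C) (h : C Γ Δ) (hΓ : Γ ⊆ Γ') (hΔ : Δ ⊆ Δ') : C Γ' Δ' := by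
  simpa only [Set.union_eq_self_of_subset_left hΓ, Set.union_eq_self_of_subset_left hΔ]
    using hC.2.1 Γ Γ' Δ Δ' h

theorem cut (hC : IsMCR C) (h : ∀ Ω : Set Fm, C (Γ ∪ Ω) (Ωᶜ ∪ Δ)) : C Γ Δ :=
  hC.2.2.1 Γ Δ h

theorem image_subst (hC : IsMCR C) (σ : ℕ → Fm) (h : C Γ Δ) : C (subst σ '' Γ) (subst σ '' Δ) :=
  hC.2.2.2 σ Γ Δ h

theorem of_forall_partition (hC : IsMCR C)
    (h : ∀ Ω : Set Fm, Γ ⊆ Ω → Δ ⊆ Ωᶜ → C Ω Ωᶜ) : C Γ Δ := by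
  refine hC.cut fun Ω => ?_
  by_cases hΓ : Γ ⊆ Ω
  · by_cases hΔ : Δ ⊆ Ωᶜ
    · exact hC.mono (h Ω hΓ hΔ) Set.subset_union_right Set.subset_union_left
    · obtain ⟨ψ, hψΔ, hψΩ⟩ := Set.not_subset.mp hΔ
      exact hC.overlap (Or.inr (not_not.mp hψΩ)) (Or.inr hψΔ)
  · obtain ⟨φ, hφΓ, hφΩ⟩ := Set.not_subset.mp hΓ
    exact hC.overlap (Or.inl hφΓ) (Or.inl hφΩ)

theorem pl_intro (hC : IsMCR C) (h : C {var 0, var 1} {(var 0).pl (var 1)}) (a b : Fm) :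
    C {a, b} {a.pl b} := by
  simpa [Set.image_pair, subst] using hC.image_subst (fun n => if n = 0 then a else b) h

theorem pl_elim (hC : IsMCR C) (h : C {(var 0).pl (var 1)} {var 0, var 1}) (a b : Fm) :
    C {a.pl b} {a, b} := by
  simpa [Set.image_pair, subst] using hC.image_subst (fun n => if n = 0 then a else b) h

open Classical in
theorem isVal_decide_mem_of_not_partition (hC : IsMCR C) (hintro : ∀ a b : Fm, C {a, b} {a.pl b})
    (helim : ∀ a b : Fm, C {a.pl b} {a, b}) (hΩ : ¬ C Ω Ωᶜ) :
    IsVal (fun φ => decide (φ ∈ Ω)) := by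
  simp only [isVal_iff, decide_eq_true_eq]
  refine fun a b => ⟨fun ha hb => ?_, fun hpl => ?_⟩
  · by_contra hpl
    exact hΩ (hC.mono (hintro a b) (Set.pair_subset ha hb) (Set.singleton_subset_iff.mpr hpl))
  · by_contra! hab
    exact hΩ (hC.mono (helim a b) (Set.singleton_subset_iff.mpr hpl)
      (Set.pair_subset hab.1 hab.2))

theorem of_mc (hC : IsMCR C) (hintro : ∀ a b : Fm, C {a, b} {a.pl b})
    (helim : ∀ a b : Fm, C {a.pl b} {a, b}) (h : Mc Γ Δ) : C Γ Δ := by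
  classical
  refine hC.of_forall_partition fun Ω hΓ hΔ => ?_
  by_contra hΩ
  obtain ⟨ψ, hψΔ, hψΩ⟩ :=
    h _ (hC.isVal_decide_mem_of_not_partition hintro helim hΩ)
      fun φ hφ => decide_eq_true (hΓ hφ)
  exact hΔ hψΔ (of_decide_eq_true hψΩ)

end IsMCR

end Fm

open Fm in
/-- `⊩_⊞` is the smallest multiple-conclusion consequence
relation containing the rules `({p,q}, {p ⊞ q})` and `({p ⊞ q}, {p,q})`:
the intersection of all relations satisfying overlap, dilution, cut and
substitution invariance which contain the two rules equals `⊩_⊞`. -/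
theorem platypus_mc_axiomatization (Γ Δ : Set Fm) :
    (∀ C : Set Fm → Set Fm → Prop, IsMCR C →
      C {Fm.var 0, Fm.var 1} {(Fm.var 0).pl (Fm.var 1)} →
      C {(Fm.var 0).pl (Fm.var 1)} {Fm.var 0, Fm.var 1} →
      C Γ Δ) ↔ Mc Γ Δ :=
  ⟨fun h => h Mc isMCR_mc (mc_pl_intro _ _) (mc_pl_elim _ _),
    fun h _C hC hintro helim => hC.of_mc (hC.pl_intro hintro) (hC.pl_elim helim) h⟩
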